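/- In the MM-SPIR model (with all constraints), let 𝒫1, 𝒫2 be size-P subsets of {1,…,K} with 𝒫1 ≠ 𝒫2 and 𝒫1 ∩ 𝒫2 ≠ ∅; write 𝒫b = 𝒫1 ∖ 𝒫2, let i be any element of 𝒫1 ∩ 𝒫2, and let 𝒫d be any subset of (𝒫1 ∩ 𝒫2) ∖ {i}. Then for every database index n ∈ {1,…,N}: H(W_i | W_{𝒫b}, W_{𝒫d}, A_n^{[𝒫2]}, Q_n^{[𝒫2]}) = H(W_i | W_{𝒫b}, W_{𝒫d}, Q_n^{[𝒫2]}); i.e., the answer of a single database reveals nothing further about the message W_i given the messages indexed by 𝒫b ∪ 𝒫d. -/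

import Mathlib

/-!
Reliability says that the answers together with `F` determine `W_T`, so database privacy makes the
unwanted messages `W_Tᶜ` independent of `(W_T, A_n^[T], Q_n^[T])`. User privacy says that the joint
law of `(W, A_n, Q_n)` is the same for all demand sets; hence `W_Tᶜ` is independent of
`(W_T, A_n^[𝒫₀], Q_n^[𝒫₀])` for *every* pair `T`, `𝒫₀` of demand sets. Now take two demand sets
`T ∋ i` and `R ∌ i` that differ by exchanging `i` with some `j`. Through `R`, the message `W_i` is
independent of `W_{T \ i}`, the answer and the query; through `T`, the messages outside `T` are
independent of all of these together. So `W_i` is independent of all other messages, the answer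
and the query jointly, and both conditional entropies equal `H(W_i)`.
-/

open Finset

namespace MMSPIR

variable {Ω : Type} [Fintype Ω]

/-- Probability that the random variable `X` takes the value `v`,
under the weight function `p` on the finite sample space `Ω`. -/
noncomputable def prob (p : Ω → ℝ) {V : Type} [DecidableEq V] (X : Ω → V) (v : V) : ℝ :=
  ∑ ω ∈ Finset.univ.filter (fun ω => X ω = v), p ω

/-- Shannon entropy of `X`, with logarithm taken to base `q`. -/
noncomputable def ent (q : ℕ) (p : Ω → ℝ) {V : Type} [Fintype V] [DecidableEq V]
    (X : Ω → V) : ℝ :=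
  -∑ v : V, prob p X v * Real.logb q (prob p X v)

/-- Conditional entropy `H(X | Y)`, base `q`. -/
noncomputable def cent (q : ℕ) (p : Ω → ℝ) {V W : Type} [Fintype V] [DecidableEq V]
    [Fintype W] [DecidableEq W] (X : Ω → V) (Y : Ω → W) : ℝ :=
  ent q p (fun ω => (X ω, Y ω)) - ent q p Y

/-- Mutual information `I(X ; Y)`, base `q`. -/
noncomputable def mi (q : ℕ) (p : Ω → ℝ) {V W : Type} [Fintype V] [DecidableEq V]
    [Fintype W] [DecidableEq W] (X : Ω → V) (Y : Ω → W) : ℝ :=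
  ent q p X + ent q p Y - ent q p (fun ω => (X ω, Y ω))

/-- Conditional mutual information `I(X ; Y | Z)`, base `q`. -/
noncomputable def cmi (q : ℕ) (p : Ω → ℝ) {U V W : Type} [Fintype U] [DecidableEq U]
    [Fintype V] [DecidableEq V] [Fintype W] [DecidableEq W]
    (X : Ω → U) (Y : Ω → V) (Z : Ω → W) : ℝ :=
  cent q p X Z + cent q p Y Z - cent q p (fun ω => (X ω, Y ω)) Z

/-- `X` and `Y` have the same distribution. -/
def IdentDist (p : Ω → ℝ) {V : Type} [DecidableEq V] (X Y : Ω → V) : Prop :=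
  ∀ v, prob p X v = prob p Y v

section Probability

variable {p : Ω → ℝ} {U V U' V' : Type}

lemma prob_nonneg (hp0 : ∀ ω, 0 ≤ p ω) [DecidableEq V] (X : Ω → V) (v : V) : 0 ≤ prob p X v :=
  sum_nonneg fun ω _ => hp0 ω

lemma prob_apply_pos (hp0 : ∀ ω, 0 ≤ p ω) [DecidableEq V] (X : Ω → V) {ω : Ω} (hω : 0 < p ω) :
    0 < prob p X (X ω) :=
  hω.trans_le <| single_le_sum (f := p) (fun ω _ => hp0 ω) (by simp)

lemma prob_le_prob (hp0 : ∀ ω, 0 ≤ p ω) [DecidableEq U] [DecidableEq V] {X : Ω → U} {Y : Ω → V}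
    {u : U} {v : V} (h : ∀ ω, X ω = u → Y ω = v) : prob p X u ≤ prob p Y v :=
  sum_le_sum_of_subset_of_nonneg (fun ω => by simpa using h ω) fun ω _ _ => hp0 ω

lemma prob_eq_sum_mul_ite (p : Ω → ℝ) [DecidableEq V] (X : Ω → V) (v : V) :
    prob p X v = ∑ ω, p ω * if X ω = v then 1 else 0 := by
  simp [prob, sum_filter]

lemma sum_prob_mul (p : Ω → ℝ) [DecidableEq V] {X : Ω → V} {s : Finset V} (hs : ∀ ω, X ω ∈ s)
    (f : V → ℝ) : ∑ v ∈ s, prob p X v * f v = ∑ ω, p ω * f (X ω) := by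
  rw [← sum_fiberwise_of_maps_to (s := univ) (g := X) fun ω _ => hs ω]
  refine sum_congr rfl fun v _ => ?_
  rw [prob, sum_mul]
  exact sum_congr rfl fun ω hω => by rw [(mem_filter.mp hω).2]

lemma sum_prob (p : Ω → ℝ) [Fintype V] [DecidableEq V] (X : Ω → V) :
    ∑ v, prob p X v = ∑ ω, p ω := by
  simpa using sum_prob_mul p (fun ω => mem_univ (X ω)) fun _ => 1

lemma IdentDist.comp [DecidableEq V] [DecidableEq U] {X Y : Ω → V} (h : IdentDist p X Y)
    (g : V → U) : IdentDist p (fun ω => g (X ω)) (fun ω => g (Y ω)) := by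
  intro u
  let s := univ.image X ∪ univ.image Y
  calc prob p (fun ω => g (X ω)) u
      = ∑ v ∈ s, prob p X v * if g v = u then 1 else 0 := by
        rw [prob_eq_sum_mul_ite, sum_prob_mul p fun ω => by simp [s]]
    _ = ∑ v ∈ s, prob p Y v * if g v = u then 1 else 0 := by simp only [h _]
    _ = prob p (fun ω => g (Y ω)) u := by
        rw [prob_eq_sum_mul_ite, sum_prob_mul p fun ω => by simp [s]]

/-- `Z` is almost surely a function of `Y`, stated without choosing the function: on the support
of `p`, the value of `Y` determines that of `Z`. -/
def Determines {Ω : Type} (p : Ω → ℝ) (Y : Ω → V) (Z : Ω → U) : Prop :=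
  ∀ ω ω', p ω ≠ 0 → p ω' ≠ 0 → Y ω = Y ω' → Z ω = Z ω'

lemma Determines.rfl {Ω : Type} {p : Ω → ℝ} {Y : Ω → V} : Determines p Y Y :=
  fun _ _ _ _ => id

lemma Determines.of_forall {Ω : Type} {p : Ω → ℝ} {Y : Ω → V} {Z : Ω → U}
    (h : ∀ ω ω', Y ω = Y ω' → Z ω = Z ω') : Determines p Y Z :=
  fun ω ω' _ _ => h ω ω'

lemma Determines.exists_comp_eq {Ω R : Type} [Nonempty R] {p : Ω → ℝ} {Y : Ω → V} {Z : Ω → U}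
    (h : Determines p Y Z) (f : U → R) : ∃ g : V → R, ∀ ω, p ω ≠ 0 → f (Z ω) = g (Y ω) := by
  have hfac : Function.FactorsThrough (fun ω : {ω // p ω ≠ 0} => f (Z ω)) (fun ω => Y ω) :=
    fun ω ω' hY => congrArg f (h ω ω' ω.2 ω'.2 hY)
  obtain ⟨g, hg⟩ := (Function.factorsThrough_iff _).mp hfac
  exact ⟨g, fun ω hω => congrFun hg ⟨ω, hω⟩⟩

/-- The discrete random variables `X` and `Y` are independent: their joint law is the product of
their laws. -/
def Indep (p : Ω → ℝ) [DecidableEq U] [DecidableEq V] (X : Ω → U) (Y : Ω → V) : Prop :=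
  ∀ u v, prob p (fun ω => (X ω, Y ω)) (u, v) = prob p X u * prob p Y v

lemma Indep.sum_mul_mul [DecidableEq U] [DecidableEq V] {X : Ω → U} {Y : Ω → V}
    (h : Indep p X Y) (f : U → ℝ) (g : V → ℝ) :
    ∑ ω, p ω * (f (X ω) * g (Y ω)) = (∑ ω, p ω * f (X ω)) * ∑ ω, p ω * g (Y ω) := by
  have hX (ω : Ω) : X ω ∈ univ.image X := mem_image_of_mem X (mem_univ ω)
  have hY (ω : Ω) : Y ω ∈ univ.image Y := mem_image_of_mem Y (mem_univ ω)
  rw [← sum_prob_mul p (fun ω => mk_mem_product (hX ω) (hY ω)) (fun z => f z.1 * g z.2),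
    ← sum_prob_mul p hX, ← sum_prob_mul p hY, sum_mul_sum, sum_product]
  refine sum_congr rfl fun u _ => sum_congr rfl fun v _ => ?_
  rw [h, mul_mul_mul_comm]

lemma Indep.of_determines [DecidableEq U] [DecidableEq V] [DecidableEq U'] [DecidableEq V']
    {X : Ω → U} {Y : Ω → V} {X' : Ω → U'} {Y' : Ω → V'}
    (h : Indep p X Y) (hX : Determines p X X') (hY : Determines p Y Y') : Indep p X' Y' := by
  intro x y
  obtain ⟨f, hf⟩ := hX.exists_comp_eq fun x' => if x' = x then (1 : ℝ) else 0
  obtain ⟨g, hg⟩ := hY.exists_comp_eq fun y' => if y' = y then (1 : ℝ) else 0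
  have mul_congr {a b : Ω → ℝ} (hab : ∀ ω, p ω ≠ 0 → a ω = b ω) :
      ∑ ω, p ω * a ω = ∑ ω, p ω * b ω :=
    sum_congr rfl fun ω _ => mul_eq_mul_left_iff.mpr (or_iff_not_imp_right.mpr (hab ω))
  rw [prob_eq_sum_mul_ite, prob_eq_sum_mul_ite, prob_eq_sum_mul_ite, mul_congr hf, mul_congr hg,
    ← h.sum_mul_mul]
  refine mul_congr fun ω hω => ?_
  rw [← hf ω hω, ← hg ω hω, ite_zero_mul_ite_zero, one_mul]
  simp only [Prod.mk.injEq]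

lemma Indep.of_identDist [DecidableEq U] [DecidableEq V] {X X' : Ω → U} {Y Y' : Ω → V}
    (h : Indep p X Y) (hXY : IdentDist p (fun ω => (X ω, Y ω)) (fun ω => (X' ω, Y' ω))) :
    Indep p X' Y' := by
  intro u v
  rw [← hXY, h, hXY.comp Prod.fst, hXY.comp Prod.snd]

lemma Indep.prodMk_right [DecidableEq U] [DecidableEq V] [DecidableEq V'] {X : Ω → U}
    {B : Ω → V'} {Z : Ω → V} (hX : Indep p X Z)
    (hB : Indep p B (fun ω => (X ω, Z ω))) : Indep p X (fun ω => (B ω, Z ω)) := by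
  have hBZ : Indep p B Z :=
    hB.of_determines .rfl (.of_forall fun _ _ h => congrArg Prod.snd h)
  rintro u ⟨b, z⟩
  calc prob p (fun ω => (X ω, B ω, Z ω)) (u, b, z)
      = prob p (fun ω => (B ω, X ω, Z ω)) (b, u, z) := by
        simp only [prob, Prod.mk.injEq, and_left_comm]
    _ = prob p X u * prob p (fun ω => (B ω, Z ω)) (b, z) := by
        rw [hB, hX, hBZ, mul_left_comm]

end Probability

section Entropy

variable {q : ℕ} {p : Ω → ℝ} {U V : Type} [Fintype U] [DecidableEq U] [Fintype V] [DecidableEq V]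

lemma ent_eq_neg_sum (q : ℕ) (p : Ω → ℝ) (X : Ω → V) :
    ent q p X = -∑ ω, p ω * Real.logb q (prob p X (X ω)) := by
  rw [ent, sum_prob_mul p fun ω => mem_univ (X ω)]

lemma cent_eq_sum (q : ℕ) (p : Ω → ℝ) (X : Ω → U) (Y : Ω → V) :
    cent q p X Y = ∑ ω, p ω * (Real.logb q (prob p Y (Y ω)) -
      Real.logb q (prob p (fun ω => (X ω, Y ω)) (X ω, Y ω))) := by
  simp only [cent, ent_eq_neg_sum, mul_sub, sum_sub_distrib]
  ring

lemma mi_eq_sum (hp0 : ∀ ω, 0 ≤ p ω) (X : Ω → U) (Y : Ω → V) :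
    mi q p X Y = ∑ z : U × V, prob p (fun ω => (X ω, Y ω)) z *
      Real.logb q (prob p (fun ω => (X ω, Y ω)) z / (prob p X z.1 * prob p Y z.2)) := by
  rw [sum_prob_mul p (fun ω => mem_univ (X ω, Y ω)) fun z =>
      Real.logb q (prob p (fun ω => (X ω, Y ω)) z / (prob p X z.1 * prob p Y z.2))]
  simp only [mi, ent_eq_neg_sum, ← sum_neg_distrib, ← sum_add_distrib, ← sum_sub_distrib]
  refine sum_congr rfl fun ω _ => ?_
  rcases (hp0 ω).eq_or_lt with hω | hω
  · simp [← hω]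
  · have hX := (prob_apply_pos hp0 X hω).ne'
    have hY := (prob_apply_pos hp0 Y hω).ne'
    have hXY := (prob_apply_pos hp0 (fun ω => (X ω, Y ω)) hω).ne'
    rw [Real.logb_div hXY (mul_ne_zero hX hY), Real.logb_mul hX hY]
    ring

lemma Indep.cent_eq_ent (hp0 : ∀ ω, 0 ≤ p ω) {X : Ω → U} {Y : Ω → V} (h : Indep p X Y) :
    cent q p X Y = ent q p X := by
  rw [cent_eq_sum, ent_eq_neg_sum, ← sum_neg_distrib]
  refine sum_congr rfl fun ω _ => ?_
  rcases (hp0 ω).eq_or_lt with hω | hω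
  · simp [← hω]
  · rw [h, Real.logb_mul (prob_apply_pos hp0 X hω).ne' (prob_apply_pos hp0 Y hω).ne']
    ring

lemma determines_of_cent_eq_zero (hq : 1 < q) (hp0 : ∀ ω, 0 ≤ p ω) {X : Ω → U} {Y : Ω → V}
    (h : cent q p X Y = 0) : Determines p Y X := by
  have hq' : (1 : ℝ) < q := mod_cast hq
  have hpos {ω} (hω : p ω ≠ 0) := prob_apply_pos hp0 (fun ω => (X ω, Y ω)) ((hp0 ω).lt_of_ne' hω)
  have nonneg (ω : Ω) : 0 ≤ p ω * (Real.logb q (prob p Y (Y ω)) -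
      Real.logb q (prob p (fun ω => (X ω, Y ω)) (X ω, Y ω))) := by
    by_cases hω : p ω = 0
    · simp [hω]
    · exact mul_nonneg (hp0 ω) <| sub_nonneg.mpr <| Real.logb_le_logb_of_le hq' (hpos hω) <|
        prob_le_prob hp0 fun _ h => congrArg Prod.snd h
  rw [cent_eq_sum, sum_eq_zero_iff_of_nonneg fun ω _ => nonneg ω] at h
  intro ω ω' hω hω' hY
  by_contra hX
  have hlt : prob p (fun ω => (X ω, Y ω)) (X ω, Y ω) < prob p Y (Y ω) :=
    sum_lt_sum_of_subset (i := ω') (fun _ => by simp +contextual) (by simp [hY])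
      (by simp [Ne.symm hX]) ((hp0 ω').lt_of_ne' hω') fun ω _ _ => hp0 ω
  have hlog := Real.logb_lt_logb hq' (hpos hω) hlt
  exact (mul_pos ((hp0 ω).lt_of_ne' hω) (sub_pos.mpr hlog)).ne' (h ω (mem_univ ω))

lemma eq_of_sum_mul_log_div_le_zero {ι : Type*} [Fintype ι] {a b : ι → ℝ} (ha : ∀ i, 0 ≤ a i)
    (hb : ∀ i, 0 ≤ b i) (hab : ∀ i, b i = 0 → a i = 0) (hsum : ∑ i, b i ≤ ∑ i, a i)
    (h : ∑ i, a i * Real.log (a i / b i) ≤ 0) : a = b := by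
  have term (i : ι) : b i * InformationTheory.klFun (a i / b i) =
      a i * Real.log (a i / b i) + b i - a i := by
    by_cases hbi : b i = 0
    · simp [hbi, hab i hbi]
    · rw [InformationTheory.klFun_apply]
      field_simp
  have nonneg (i : ι) : 0 ≤ b i * InformationTheory.klFun (a i / b i) :=
    mul_nonneg (hb i) (InformationTheory.klFun_nonneg (div_nonneg (ha i) (hb i)))
  have sum_le : ∑ i, b i * InformationTheory.klFun (a i / b i) ≤ 0 := by
    simp only [term, sum_sub_distrib, sum_add_distrib]
    linarith
  have eq_zero := (sum_eq_zero_iff_of_nonneg fun i _ => nonneg i).mp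
    (sum_le.antisymm (sum_nonneg fun i _ => nonneg i))
  funext i
  rcases mul_eq_zero.mp (eq_zero i (mem_univ i)) with hbi | hkl
  · rw [hbi, hab i hbi]
  · exact eq_of_div_eq_one <|
      (InformationTheory.klFun_eq_zero_iff (div_nonneg (ha i) (hb i))).mp hkl

lemma indep_of_mi_eq_zero (hq : 1 < q) (hp0 : ∀ ω, 0 ≤ p ω) (hp1 : ∑ ω, p ω = 1) {X : Ω → U}
    {Y : Ω → V} (h : mi q p X Y = 0) : Indep p X Y := by
  have prob_prodMk_eq_zero (z : U × V) (hz : prob p X z.1 * prob p Y z.2 = 0) :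
      prob p (fun ω => (X ω, Y ω)) z = 0 := by
    refine le_antisymm ?_ (prob_nonneg hp0 _ _)
    rcases mul_eq_zero.mp hz with hz | hz <;> rw [← hz] <;> apply prob_le_prob hp0
    · exact fun _ h => congrArg Prod.fst h
    · exact fun _ h => congrArg Prod.snd h
  have hlog : 0 < Real.log q := Real.log_pos (mod_cast hq)
  simp only [mi_eq_sum hp0, Real.logb, ← mul_div_assoc, ← sum_div, div_eq_zero_iff, hlog.ne',
    or_false] at h
  have joint_eq := eq_of_sum_mul_log_div_le_zero
    (b := fun z : U × V => prob p X z.1 * prob p Y z.2) (prob_nonneg hp0 _)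
    (fun z => mul_nonneg (prob_nonneg hp0 _ _) (prob_nonneg hp0 _ _)) prob_prodMk_eq_zero
    (by rw [Fintype.sum_prod_type, ← sum_mul_sum, sum_prob, sum_prob, sum_prob, hp1, one_mul])
    h.le
  exact fun u v => congrFun joint_eq (u, v)

end Entropy

section Retrieval

lemma restrict_eq_restrict_iff {ι : Type*} {π : ι → Type*} {s : Finset ι} {f g : ∀ k, π k} :
    s.restrict f = s.restrict g ↔ ∀ k ∈ s, f k = g k := by
  simp only [funext_iff, restrict_def, Subtype.forall]

variable {ι δ MT QT AT FT : Type} [Fintype ι] [DecidableEq ι] [Fintype δ] [DecidableEq δ]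
  [Fintype MT] [DecidableEq MT] [Fintype QT] [DecidableEq QT] [Fintype AT] [DecidableEq AT]
  [Fintype FT] [DecidableEq FT] {q P : ℕ} {p : Ω → ℝ} {W : ι → Ω → MT} {F : Ω → FT}
  {Q : Finset ι → δ → Ω → QT} {A : Finset ι → δ → Ω → AT}

/-- Symmetrically private retrieval of any `P` of the messages `W` from the databases `δ`: the
reliability, user privacy and database privacy constraints of MM-SPIR. The common randomness does
not appear, so user privacy concerns only the joint law of query, answer and messages. -/
structure IsSymmetricPrivateRetrieval (q P : ℕ) (p : Ω → ℝ) (W : ι → Ω → MT) (F : Ω → FT)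
    (Q : Finset ι → δ → Ω → QT) (A : Finset ι → δ → Ω → AT) : Prop where
  reliable : ∀ 𝒫₀, #𝒫₀ = P →
    cent q p (fun ω => 𝒫₀.restrict (W · ω)) (fun ω => ((A 𝒫₀ · ω), F ω)) = 0
  user_private : ∀ n 𝒫₁ 𝒫₂, #𝒫₁ = P → #𝒫₂ = P →
    IdentDist p (fun ω => (Q 𝒫₁ n ω, A 𝒫₁ n ω, (W · ω)))
      (fun ω => (Q 𝒫₂ n ω, A 𝒫₂ n ω, (W · ω)))
  database_private : ∀ 𝒫₀, #𝒫₀ = P →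
    mi q p (fun ω => 𝒫₀ᶜ.restrict (W · ω)) (fun ω => ((Q 𝒫₀ · ω), (A 𝒫₀ · ω), F ω)) = 0

namespace IsSymmetricPrivateRetrieval

lemma indep_compl (h : IsSymmetricPrivateRetrieval q P p W F Q A) (hq : 1 < q)
    (hp0 : ∀ ω, 0 ≤ p ω) (hp1 : ∑ ω, p ω = 1) {𝒫₀ T : Finset ι} (h𝒫₀ : #𝒫₀ = P) (hT : #T = P)
    (n : δ) :
    Indep p (fun ω => Tᶜ.restrict (W · ω))
      (fun ω => (T.restrict (W · ω), A 𝒫₀ n ω, Q 𝒫₀ n ω)) := by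
  have decodes := determines_of_cent_eq_zero hq hp0 (h.reliable T hT)
  have indep_T : Indep p (fun ω => Tᶜ.restrict (W · ω))
      (fun ω => (T.restrict (W · ω), A T n ω, Q T n ω)) := by
    refine (indep_of_mi_eq_zero hq hp0 hp1 (h.database_private T hT)).of_determines
      .rfl fun ω ω' hω hω' heq => ?_
    obtain ⟨hQ, hA, hF⟩ : (Q T · ω) = (Q T · ω') ∧ (A T · ω) = (A T · ω') ∧ F ω = F ω' := by
      simpa only [Prod.mk.injEq] using heq
    exact Prod.ext (decodes ω ω' hω hω' (Prod.ext hA hF))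
      (Prod.ext (congrFun hA n) (congrFun hQ n))
  exact indep_T.of_identDist <| (h.user_private n T 𝒫₀ hT h𝒫₀).comp
    fun z => (Tᶜ.restrict z.2.2, T.restrict z.2.2, z.2.1, z.1)

lemma indep_message (h : IsSymmetricPrivateRetrieval q P p W F Q A) (hq : 1 < q)
    (hp0 : ∀ ω, 0 ≤ p ω) (hp1 : ∑ ω, p ω = 1) (hP : 1 ≤ P) (hPι : P < Fintype.card ι)
    {𝒫₀ : Finset ι} (h𝒫₀ : #𝒫₀ = P) (i : ι) (n : δ) :
    Indep p (W i) (fun ω => (({i}ᶜ : Finset ι).restrict (W · ω), A 𝒫₀ n ω, Q 𝒫₀ n ω)) := by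
  obtain ⟨R, hRi, hR⟩ : ∃ R ⊆ ({i}ᶜ : Finset ι), #R = P :=
    exists_subset_card_eq (by rw [card_compl, card_singleton]; omega)
  have hiR : i ∉ R := fun hi => by simpa using hRi hi
  obtain ⟨j, hj⟩ : R.Nonempty := card_pos.mp (by omega)
  have hT : #(insert i (R.erase j)) = P := by
    rw [card_insert_of_notMem fun hi => hiR (mem_of_mem_erase hi), card_erase_add_one hj, hR]
  have indep_i : Indep p (W i) (fun ω => ((R.erase j).restrict (W · ω), A 𝒫₀ n ω, Q 𝒫₀ n ω)) := by
    refine (h.indep_compl hq hp0 hp1 h𝒫₀ hR n).of_determines (.of_forall ?_) (.of_forall ?_)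
    all_goals simp only [Prod.mk.injEq, restrict_eq_restrict_iff]; grind [mem_compl]
  have indep_compl_T := (h.indep_compl hq hp0 hp1 h𝒫₀ hT n).of_determines
    (Y' := fun ω => (W i ω, (R.erase j).restrict (W · ω), A 𝒫₀ n ω, Q 𝒫₀ n ω))
    .rfl (.of_forall <| by
      simp only [Prod.mk.injEq, restrict_eq_restrict_iff]; grind [mem_compl])
  refine (indep_i.prodMk_right indep_compl_T).of_determines .rfl
    (.of_forall ?_)
  simp only [Prod.mk.injEq, restrict_eq_restrict_iff]
  grind [mem_compl]

end IsSymmetricPrivateRetrieval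

theorem no_leakage_of_common_message_general
    (h : IsSymmetricPrivateRetrieval q P p W F Q A) (hq : 1 < q) (hp0 : ∀ ω, 0 ≤ p ω)
    (hp1 : ∑ ω, p ω = 1) (hP : 1 ≤ P) (hPι : P < Fintype.card ι) {𝒫₀ : Finset ι} (h𝒫₀ : #𝒫₀ = P)
    {i : ι} {B D : Finset ι} (hB : i ∉ B) (hD : i ∉ D) (n : δ) :
    cent q p (W i)
      (fun ω => (B.restrict (W · ω), D.restrict (W · ω), A 𝒫₀ n ω, Q 𝒫₀ n ω)) =
    cent q p (W i) (fun ω => (B.restrict (W · ω), D.restrict (W · ω), Q 𝒫₀ n ω)) := by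
  have indep := h.indep_message hq hp0 hp1 hP hPι h𝒫₀ i n
  rw [(indep.of_determines .rfl (.of_forall ?_)).cent_eq_ent hp0,
    (indep.of_determines .rfl (.of_forall ?_)).cent_eq_ent hp0]
  all_goals simp only [Prod.mk.injEq, restrict_eq_restrict_iff]; grind [mem_compl]

end Retrieval

theorem no_leakage_of_common_message
    {Ω MT QT AT FT ST : Type}
    [Fintype Ω] [Fintype MT] [DecidableEq MT] [Fintype QT] [DecidableEq QT]
    [Fintype AT] [DecidableEq AT] [Fintype FT] [DecidableEq FT]
    [Fintype ST] [DecidableEq ST]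
    (N K P L q : ℕ) (hN : 2 ≤ N) (hK : 2 ≤ K) (hP1 : 1 ≤ P) (hP2 : P ≤ K - 1)
    (hL : 1 ≤ L) (hq : IsPrimePow q)
    (p : Ω → ℝ) (hp0 : ∀ ω, 0 ≤ p ω) (hp1 : (∑ ω, p ω) = 1)
    (W : Fin K → Ω → MT) (F : Ω → FT) (S : Ω → ST)
    (Q : Finset (Fin K) → Fin N → Ω → QT)
    (A : Finset (Fin K) → Fin N → Ω → AT)
    (hWk : ∀ k, ent q p (W k) = (L : ℝ))
    (hWall : ent q p (fun ω (k : Fin K) => W k ω) = (K : ℝ) * L)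
    (hind : ent q p (fun ω => (F ω, S ω, fun k : Fin K => W k ω)) =
      ent q p F + ent q p S + ent q p (fun ω (k : Fin K) => W k ω))
    (hQdet : ∀ 𝒫₀ : Finset (Fin K), 𝒫₀.card = P →
      cent q p (fun ω (n : Fin N) => Q 𝒫₀ n ω) F = 0)
    (hAdet : ∀ 𝒫₀ : Finset (Fin K), 𝒫₀.card = P → ∀ n : Fin N,
      cent q p (A 𝒫₀ n) (fun ω => (Q 𝒫₀ n ω, (fun k : Fin K => W k ω), S ω)) = 0)
    (hrel : ∀ 𝒫₀ : Finset (Fin K), 𝒫₀.card = P →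
      cent q p (fun ω (k : {x : Fin K // x ∈ 𝒫₀}) => W k.1 ω)
        (fun ω => ((fun n : Fin N => A 𝒫₀ n ω), F ω)) = 0)
    (hupriv : ∀ (n : Fin N) (𝒫₁ 𝒫₂ : Finset (Fin K)), 𝒫₁.card = P → 𝒫₂.card = P →
      IdentDist p
        (fun ω => (Q 𝒫₁ n ω, A 𝒫₁ n ω, (fun k : Fin K => W k ω), S ω))
        (fun ω => (Q 𝒫₂ n ω, A 𝒫₂ n ω, (fun k : Fin K => W k ω), S ω)))
    (hdpriv : ∀ 𝒫₀ : Finset (Fin K), 𝒫₀.card = P →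
      mi q p (fun ω (k : {x : Fin K // x ∈ 𝒫₀ᶜ}) => W k.1 ω)
        (fun ω => ((fun n : Fin N => Q 𝒫₀ n ω), (fun n : Fin N => A 𝒫₀ n ω), F ω)) = 0)
    : ∀ (𝒫₁ 𝒫₂ : Finset (Fin K)), 𝒫₁.card = P → 𝒫₂.card = P → 𝒫₁ ≠ 𝒫₂ →
      𝒫₁ ∩ 𝒫₂ ≠ ∅ →
      ∀ i ∈ 𝒫₁ ∩ 𝒫₂, ∀ 𝒫d ⊆ (𝒫₁ ∩ 𝒫₂).erase i, ∀ n : Fin N,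
      cent q p (W i)
        (fun ω => ((fun k : {x : Fin K // x ∈ 𝒫₁ \ 𝒫₂} => W k.1 ω),
                   (fun k : {x : Fin K // x ∈ 𝒫d} => W k.1 ω),
                   A 𝒫₂ n ω, Q 𝒫₂ n ω)) =
      cent q p (W i)
        (fun ω => ((fun k : {x : Fin K // x ∈ 𝒫₁ \ 𝒫₂} => W k.1 ω),
                   (fun k : {x : Fin K // x ∈ 𝒫d} => W k.1 ω),
                   Q 𝒫₂ n ω)) := by
  intro 𝒫₁ 𝒫₂ _ h𝒫₂ _ _ i hi 𝒫d hd n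
  exact no_leakage_of_common_message_general ⟨hrel, fun n T₁ T₂ h₁ h₂ =>
    (hupriv n T₁ T₂ h₁ h₂).comp fun z => (z.1, z.2.1, z.2.2.1), hdpriv⟩ hq.one_lt hp0 hp1 hP1
    (by rw [Fintype.card_fin]; omega) h𝒫₂ (by grind) (by grind) n

end MMSPIR
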